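/- If the weighted oriented clique n-simplicial complex S_n is globally χ-complete, then the Gauss–Bonnet operator D = d + δ, defined on ⊕_{i=0}^n C_c^i(V) in the Hilbert space H = ⊕_{i=0}^n ℓ²(m_i), is essentially self-adjoint; that is, its closure is self-adjoint, equivalently its minimal and maximal extensions coincide. -/

import Mathlib

/-!
An element `u` of the maximal domain of `D` is approximated in graph norm by `φ_k u`, where
`φ_k` is the average `χ̃_k` truncated to `[0, 1]`. Each `φ_k u` is a cochain family of finite
support, `0 ≤ φ_k ≤ 1`, and `φ_k` is eventually `1` on any given simplex. In the decomposition
`D(φ_k u) - Du = [δ, φ_k]u + [d, φ_k]u + (φ_k - 1)Du` each summand tends to `0` by dominated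
convergence; for the commutators the dominating function comes from the uniform bound
`Σ_y m_{i+1}(x, y) |φ_k(x, y) - φ_k(x)|² ≤ C m_i(x)` of `IsChiWitnessOn.cut_energy`, combined
with Cauchy–Schwarz for `δ` and with Fubini for `d`.

That bound is not immediate from global `χ`-completeness, because `χ̃` is symmetric while the
coboundary carries signs. For even `i` one has
`(i + 1) dχ̃(x, y) = χ(y) - Σ_l (-1)^l χ(x_l)`, and averaging over the cyclic rotations of `x`
yields `χ(y) - χ̃(x)`. For odd `i`, `dχ̃ = 1` where `χ = 1`, so the hypothesis bounds the
weighted degree `Σ_y m_{i+1}(x, y) / m_i(x)`, and `|φ_k(x, y) - φ_k(x)| ≤ 1` suffices.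
-/

open Filter Function Set
open scoped Topology

namespace DiscreteHodge

/-- A weighted graph `G = (V, m₀, m₁)`: a strictly positive vertex weight `m₀`, a symmetric
nonnegative edge weight `m₁`; `x, y` are neighbors iff `m₁ x y > 0`; `G` is locally finite. -/
structure WG (V : Type*) where
  m₀ : V → ℝ
  m₁ : V → V → ℝ
  m₀_pos : ∀ x, 0 < m₀ x
  m₁_nonneg : ∀ x y, 0 ≤ m₁ x y
  m₁_symm : ∀ x y, m₁ x y = m₁ y x
  locFin : ∀ x, {y | 0 < m₁ x y}.Finite

variable {V : Type*}

/-- Adjacency in a weighted graph. -/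
def WG.Adj (G : WG V) (x y : V) : Prop := 0 < G.m₁ x y

/-- A tuple of vertices is a simplex of the clique complex iff its vertices are pairwise
distinct and pairwise adjacent (span a complete subgraph). -/
def IsSimplex (G : WG V) {k : ℕ} (x : Fin k → V) : Prop :=
  Function.Injective x ∧ ∀ a b : Fin k, a ≠ b → G.Adj (x a) (x b)

/-- The family of simplex weights `(m_i)` of the weighted oriented clique `n`-simplicial
complex over `G`: `m i` is defined on `(i+1)`-tuples, extends `m₀, m₁`, is strictly positive
exactly on simplices (for `1 ≤ i ≤ n`) and is invariant under permutations of its arguments. -/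
structure CliqueWeights (G : WG V) (n : ℕ) where
  m : ∀ i : ℕ, (Fin (i + 1) → V) → ℝ
  nonneg : ∀ i x, 0 ≤ m i x
  m_zero : ∀ x : Fin 1 → V, m 0 x = G.m₀ (x 0)
  m_one : ∀ x : Fin 2 → V, m 1 x = G.m₁ (x 0) (x 1)
  pos_iff : ∀ i, 1 ≤ i → i ≤ n → ∀ x : Fin (i + 1) → V, (0 < m i x ↔ IsSimplex G x)
  perm_inv : ∀ i, 1 ≤ i → i ≤ n → ∀ (x : Fin (i + 1) → V) (σ : Equiv.Perm (Fin (i + 1))),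
      m i (x ∘ σ) = m i x

/-- An alternating function on tuples. -/
def IsAlternating {k : ℕ} (f : (Fin k → V) → ℂ) : Prop :=
  ∀ (x : Fin k → V) (σ : Equiv.Perm (Fin k)),
    f (x ∘ σ) = ((Equiv.Perm.sign σ : ℤ) : ℂ) * f x

/-- An `i`-cochain: an alternating function on `(i+1)`-tuples supported on oriented
`i`-simplices.  Elements of `C_c^i(V)` are cochains with finite support. -/
def IsCochain (G : WG V) (i : ℕ) (f : (Fin (i + 1) → V) → ℂ) : Prop :=
  IsAlternating f ∧ ∀ x, ¬ IsSimplex G x → f x = 0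

/-- Coboundary operator on the part of the complex lying over `Λ ⊆ V`:
`d_i f(x₁,…,x_{i+1}) = Σ_j (−1)^{j+1} f(x₁,…,x̂_j,…,x_{i+1})` on simplices with all
vertices in `Λ`, and `0` elsewhere. -/
noncomputable def dOn (G : WG V) (Λ : Set V) (i : ℕ) (f : (Fin (i + 1) → V) → ℂ) :
    (Fin (i + 2) → V) → ℂ :=
  Set.indicator {x | IsSimplex G x ∧ ∀ j, x j ∈ Λ}
    (fun x => ∑ j : Fin (i + 2), (-1 : ℂ) ^ (j : ℕ) * f (x ∘ j.succAbove))

/-- The coboundary operator `d_{i+1} : C_c^i(V) → C_c^{i+1}(V)` (paper index `i+1`). -/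
noncomputable def d (G : WG V) (i : ℕ) (f : (Fin (i + 1) → V) → ℂ) :
    (Fin (i + 2) → V) → ℂ :=
  dOn G Set.univ i f

/-- Codifferential on the part of the complex lying over `Λ ⊆ V`:
`δ g(x₁,…,x_{i+1}) = (1/m_i(x)) Σ_{y ∈ F(x) ∩ Λ} m_{i+1}(x,y) g(x,y)`; vertices outside the
common-neighbor set `F(x)` contribute `0` since `m_{i+1}` vanishes on non-simplices. -/
noncomputable def deltaOn (G : WG V) {n : ℕ} (W : CliqueWeights G n) (Λ : Set V) (i : ℕ)
    (g : (Fin (i + 2) → V) → ℂ) : (Fin (i + 1) → V) → ℂ :=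
  fun x => ((W.m i x : ℝ) : ℂ)⁻¹ *
    ∑' y : V, Set.indicator Λ
      (fun y => ((W.m (i + 1) (Fin.snoc x y) : ℝ) : ℂ) * g (Fin.snoc x y)) y

/-- The codifferential `δ_{i+1} : C_c^{i+1}(V) → C_c^i(V)` (paper index `i+1`). -/
noncomputable def delta (G : WG V) {n : ℕ} (W : CliqueWeights G n) (i : ℕ)
    (g : (Fin (i + 2) → V) → ℂ) : (Fin (i + 1) → V) → ℂ :=
  deltaOn G W Set.univ i g

/-- Squared `ℓ²(m_i)` norm: `‖f‖² = (1/(i+1)!) Σ_σ m_i(σ) |f(σ)|²`. -/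
noncomputable def norm2 {G : WG V} {n : ℕ} (W : CliqueWeights G n) (i : ℕ)
    (f : (Fin (i + 1) → V) → ℂ) : ℝ :=
  ((Nat.factorial (i + 1) : ℝ))⁻¹ * ∑' x : Fin (i + 1) → V, W.m i x * ‖f x‖ ^ 2

/-- Membership in `ℓ²(m_i)`. -/
def MemL2 {G : WG V} {n : ℕ} (W : CliqueWeights G n) (i : ℕ)
    (f : (Fin (i + 1) → V) → ℂ) : Prop :=
  Summable (fun x : Fin (i + 1) → V => W.m i x * ‖f x‖ ^ 2)

/-- The `ℓ²(m_i)` inner product `⟨f,g⟩ = (1/(i+1)!) Σ_σ m_i(σ) f(σ) conj (g σ)`. -/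
noncomputable def inner2 {G : WG V} {n : ℕ} (W : CliqueWeights G n) (i : ℕ)
    (f g : (Fin (i + 1) → V) → ℂ) : ℂ :=
  ((Nat.factorial (i + 1) : ℂ))⁻¹ *
    ∑' x : Fin (i + 1) → V, ((W.m i x : ℝ) : ℂ) * f x * (starRingEnd ℂ) (g x)

/-- Convergence `u k → f` in `ℓ²(m_i)`. -/
def TendstoL2 {G : WG V} {n : ℕ} (W : CliqueWeights G n) (i : ℕ)
    (u : ℕ → (Fin (i + 1) → V) → ℂ) (f : (Fin (i + 1) → V) → ℂ) : Prop :=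
  Tendsto (fun k => norm2 W i (fun x => u k x - f x)) atTop (𝓝 0)

/-- The Gauss–Bonnet operator `D = d + δ` acting componentwise on cochain families:
`(DF)_i = d_i f_{i-1} + δ_{i+1} f_{i+1}` with the end terms absent. -/
noncomputable def Dop (G : WG V) {n : ℕ} (W : CliqueWeights G n)
    (f : ∀ i : ℕ, (Fin (i + 1) → V) → ℂ) : ∀ i : ℕ, (Fin (i + 1) → V) → ℂ
  | 0 => delta G W 0 (f 1)
  | (i + 1) =>
      if i + 1 ≤ n then (fun x => d G i (f i) x + delta G W (i + 1) (f (i + 2)) x) else 0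

/-- The Laplacian block `L_i = δ_{i+1} d_{i+1} + d_i δ_i` on `C_c^i(V)`
(the `d_iδ_i` term absent for `i = 0`, the `δ_{i+1}d_{i+1}` term absent for `i = n`). -/
noncomputable def Lblock (G : WG V) {n : ℕ} (W : CliqueWeights G n) :
    ∀ i : ℕ, ((Fin (i + 1) → V) → ℂ) → (Fin (i + 1) → V) → ℂ
  | 0 => fun g => if 1 ≤ n then delta G W 0 (d G 0 g) else 0
  | (i + 1) => fun g x =>
      (if i + 2 ≤ n then delta G W (i + 1) (d G (i + 1) g) x else 0)
        + d G i (delta G W i g) x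

/-- A family `(f_0, …, f_n)` of cochains, one in each degree (encoded with `f i = 0`
for `i > n`). -/
def CochainFamily (G : WG V) (n : ℕ) (u : ∀ i : ℕ, (Fin (i + 1) → V) → ℂ) : Prop :=
  (∀ i, IsCochain G i (u i)) ∧ ∀ i, n < i → u i = 0

/-- All components finitely supported, i.e. membership in `⊕_{i=0}^n C_c^i(V)`. -/
def FinSuppFamily (u : ∀ i : ℕ, (Fin (i + 1) → V) → ℂ) : Prop :=
  ∀ i, (Function.support (u i)).Finite

/-- Membership in `H = ⊕_{i=0}^n ℓ²(m_i)`. -/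
def MemL2Family {G : WG V} {n : ℕ} (W : CliqueWeights G n)
    (u : ∀ i : ℕ, (Fin (i + 1) → V) → ℂ) : Prop :=
  ∀ i, MemL2 W i (u i)

/-- Componentwise `ℓ²` convergence of cochain families, i.e. convergence in `H`. -/
def TendstoL2Family {G : WG V} {n : ℕ} (W : CliqueWeights G n)
    (u : ℕ → ∀ i : ℕ, (Fin (i + 1) → V) → ℂ)
    (f : ∀ i : ℕ, (Fin (i + 1) → V) → ℂ) : Prop :=
  ∀ i, TendstoL2 W i (fun k => u k i) (f i)

/-- Extension of a vertex function to tuples by averaging: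
`χ̃(x_0,…,x_{k-1}) = (1/k) Σ_j χ(x_j)`. -/
noncomputable def avg (χ : V → ℝ) {k : ℕ} (x : Fin k → V) : ℂ :=
  (k : ℂ)⁻¹ * ∑ j : Fin k, (χ (x j) : ℂ)

/-- The discrete gradient energy of a vertex function `χ` at a `j`-simplex `x` (relative to
the region `Λ`): `(1/m_j(x)) Σ_{y ∈ F(x) ∩ Λ} m_{j+1}(x,y) |d_{j+1} χ̃ (x,y)|²`. -/
noncomputable def gradEnergyOn {G : WG V} {n : ℕ} (W : CliqueWeights G n) (Λ : Set V)
    (j : ℕ) (χ : V → ℝ) (x : Fin (j + 1) → V) : ℝ :=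
  (W.m j x)⁻¹ * ∑' y : V, Set.indicator Λ
    (fun y => W.m (j + 1) (Fin.snoc x y) *
      ‖dOn G Λ j (fun σ : Fin (j + 1) → V => avg χ σ) (Fin.snoc x y)‖ ^ 2) y

/-- `(O, χ)` is a system of plateau cut-offs witnessing global `χ`-completeness of the part
of the complex lying over `Λ`: `(O k)` is an increasing exhaustion of `Λ` by finite sets,
the `χ k` are finitely supported vertex functions whose averages equal `1` on every simplex
with all vertices in `O k`, with a uniform discrete-gradient energy bound in all degrees. -/
def IsChiWitnessOn {G : WG V} {n : ℕ} (W : CliqueWeights G n) (Λ : Set V)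
    (O : ℕ → Set V) (χ : ℕ → V → ℝ) : Prop :=
  (∀ k, (O k).Finite) ∧ Monotone O ∧ (∀ k, O k ⊆ Λ) ∧ (⋃ k, O k) = Λ ∧
  (∀ k, (Function.support (χ k)).Finite) ∧
  (∀ k (i : ℕ), i ≤ n → ∀ x : Fin (i + 1) → V, IsSimplex G x → (∀ j, x j ∈ Λ) →
      (∀ j, x j ∈ O k) → avg (χ k) x = 1) ∧
  ∃ C > 0, ∀ k (j : ℕ), j + 1 ≤ n → ∀ x : Fin (j + 1) → V,
      IsSimplex G x → (∀ a, x a ∈ Λ) → gradEnergyOn W Λ j (χ k) x ≤ C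

/-- Global `χ`-completeness of the restriction of the complex to `Λ`. -/
def GloballyChiCompleteOn {G : WG V} {n : ℕ} (W : CliqueWeights G n) (Λ : Set V) : Prop :=
  ∃ O χ, IsChiWitnessOn W Λ O χ

/-- Global `χ`-completeness of the weighted clique `n`-simplicial complex. -/
def GloballyChiComplete {G : WG V} {n : ℕ} (W : CliqueWeights G n) : Prop :=
  GloballyChiCompleteOn W Set.univ

/-- `(O, χ)` witnesses local `χ`-completeness at level `ℓ`: cut-offs are required only on
`ℓ`-simplices, and the energy bound only in degree `ℓ`. -/
def IsChiWitnessAtLevel {G : WG V} {n : ℕ} (W : CliqueWeights G n) (ℓ : ℕ)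
    (O : ℕ → Set V) (χ : ℕ → V → ℝ) : Prop :=
  (∀ k, (O k).Finite) ∧ Monotone O ∧ (⋃ k, O k) = Set.univ ∧
  (∀ k, (Function.support (χ k)).Finite) ∧
  (∀ k (x : Fin (ℓ + 1) → V), IsSimplex G x → (∀ j, x j ∈ O k) → avg (χ k) x = 1) ∧
  ∃ C > 0, ∀ k (j : ℕ), j + 1 = ℓ → ∀ x : Fin (j + 1) → V,
      IsSimplex G x → gradEnergyOn W Set.univ j (χ k) x ≤ C

/-- Local `χ`-completeness at level `ℓ`. -/
def LocallyChiCompleteAtLevel {G : WG V} {n : ℕ} (W : CliqueWeights G n) (ℓ : ℕ) : Prop :=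
  ∃ O χ, IsChiWitnessAtLevel W ℓ O χ

/-- Essential self-adjointness of the Gauss–Bonnet operator `D = d + δ`, phrased as
`D_min = D_max`: every `u` in the maximal domain (i.e. `u ∈ H` with the pointwise-defined
`Du ∈ H`) is approximated, in the graph norm of `D`, by finitely supported cochain
families (elements of `⊕_{i=0}^n C_c^i(V)`). -/
def ESA_D {G : WG V} {n : ℕ} (W : CliqueWeights G n) : Prop :=
  ∀ u : ∀ i : ℕ, (Fin (i + 1) → V) → ℂ,
    CochainFamily G n u → MemL2Family W u → MemL2Family W (Dop G W u) →
    ∃ uk : ℕ → ∀ i : ℕ, (Fin (i + 1) → V) → ℂ,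
      (∀ k, CochainFamily G n (uk k) ∧ FinSuppFamily (uk k)) ∧
      TendstoL2Family W uk u ∧
      TendstoL2Family W (fun k => Dop G W (uk k)) (Dop G W u)

/-- Essential self-adjointness of the Hodge Laplacian `L = D²`, phrased as `L_min = L_max`
via graph-norm approximation from `⊕_{i=0}^n C_c^i(V)`. -/
def ESA_L {G : WG V} {n : ℕ} (W : CliqueWeights G n) : Prop :=
  ∀ u : ∀ i : ℕ, (Fin (i + 1) → V) → ℂ,
    CochainFamily G n u → MemL2Family W u → MemL2Family W (Dop G W (Dop G W u)) →
    ∃ uk : ℕ → ∀ i : ℕ, (Fin (i + 1) → V) → ℂ,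
      (∀ k, CochainFamily G n (uk k) ∧ FinSuppFamily (uk k)) ∧
      TendstoL2Family W uk u ∧
      TendstoL2Family W (fun k => Dop G W (Dop G W (uk k))) (Dop G W (Dop G W u))

/-! ### Sequences that are null in a weighted `ℓ²` norm -/

/-- The sequence `w` lies in the weighted `ℓ²(m)` and tends to `0` there. -/
def IsNull {ι : Type*} (m : ι → ℝ) (w : ℕ → ι → ℂ) : Prop :=
  (∀ k, Summable fun x => m x * ‖w k x‖ ^ 2) ∧
    Tendsto (fun k => ∑' x, m x * ‖w k x‖ ^ 2) atTop (𝓝 0)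

lemma IsNull.congr {ι : Type*} {m : ι → ℝ} {w w' : ℕ → ι → ℂ} (h : IsNull m w)
    (hw : ∀ k x, m x ≠ 0 → w' k x = w k x) : IsNull m w' := by
  have : (fun k x => m x * ‖w' k x‖ ^ 2) = fun k x => m x * ‖w k x‖ ^ 2 := by
    funext k x
    by_cases hx : m x = 0
    · simp [hx]
    · rw [hw k x hx]
  unfold IsNull at h ⊢
  have h2 : ∀ k, (fun x => m x * ‖w' k x‖ ^ 2) = fun x => m x * ‖w k x‖ ^ 2 :=
    fun k => congrFun this k
  simp only [h2]
  exact h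

lemma isNull_zero {ι : Type*} (m : ι → ℝ) : IsNull m fun _ _ => 0 :=
  ⟨fun _ => by simp, by simp⟩

lemma IsNull.add {ι : Type*} {m : ι → ℝ} (hm : ∀ x, 0 ≤ m x) {v w : ℕ → ι → ℂ}
    (hv : IsNull m v) (hw : IsNull m w) : IsNull m fun k x => v k x + w k x := by
  have hle : ∀ k x, m x * ‖v k x + w k x‖ ^ 2 ≤
      2 * (m x * ‖v k x‖ ^ 2) + 2 * (m x * ‖w k x‖ ^ 2) := by
    intro k x
    have h1 : ‖v k x + w k x‖ ^ 2 ≤ 2 * ‖v k x‖ ^ 2 + 2 * ‖w k x‖ ^ 2 := by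
      have := norm_add_le (v k x) (w k x)
      nlinarith [sq_nonneg (‖v k x‖ - ‖w k x‖), norm_nonneg (v k x + w k x)]
    nlinarith [mul_le_mul_of_nonneg_left h1 (hm x)]
  have h0 : ∀ k x, 0 ≤ m x * ‖v k x + w k x‖ ^ 2 := fun k x =>
    mul_nonneg (hm x) (sq_nonneg _)
  have hs := fun k => ((hv.1 k).mul_left 2).add ((hw.1 k).mul_left 2)
  have hsum := fun k => Summable.of_nonneg_of_le (h0 k) (hle k) (hs k)
  refine ⟨hsum, squeeze_zero (fun k => tsum_nonneg (h0 k))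
    (g := fun k => 2 * (∑' x, m x * ‖v k x‖ ^ 2) + 2 * ∑' x, m x * ‖w k x‖ ^ 2)
    (fun k => ?_) ?_⟩
  · refine ((hsum k).tsum_le_tsum (hle k) (hs k)).trans ?_
    rw [((hv.1 k).mul_left 2).tsum_add ((hw.1 k).mul_left 2), tsum_mul_left, tsum_mul_left]
  · simpa using (hv.2.const_mul 2).add (hw.2.const_mul 2)

lemma IsNull.sum {ι κ : Type*} {m : ι → ℝ} (hm : ∀ x, 0 ≤ m x) {w : κ → ℕ → ι → ℂ}
    (s : Finset κ) (hw : ∀ j, IsNull m (w j)) : IsNull m fun k x => ∑ j ∈ s, w j k x := by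
  classical
  induction s using Finset.induction_on with
  | empty => simpa using isNull_zero m
  | insert a s ha ih =>
    simp only [Finset.sum_insert ha]
    exact (hw a).add hm ih

lemma isNull_of_dominated {ι : Type*} {m : ι → ℝ} (hm : ∀ x, 0 ≤ m x) {w : ℕ → ι → ℂ}
    {b : ι → ℝ} (hb : Summable b) (hle : ∀ k x, m x * ‖w k x‖ ^ 2 ≤ b x)
    (hz : ∀ x, ∀ᶠ k in atTop, w k x = 0) : IsNull m w := by
  have h0 : ∀ k x, 0 ≤ m x * ‖w k x‖ ^ 2 := fun k x => mul_nonneg (hm x) (sq_nonneg _)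
  refine ⟨fun k => Summable.of_nonneg_of_le (h0 k) (hle k) hb, ?_⟩
  have := tendsto_tsum_of_dominated_convergence (𝓕 := atTop)
    (f := fun k x => m x * ‖w k x‖ ^ 2) (g := fun _ => 0) hb
    (fun x => tendsto_const_nhds.congr' ((hz x).mono fun k hk => by simp [hk]))
    (Eventually.of_forall fun k x => by
      rw [Real.norm_of_nonneg (h0 k x)]; exact hle k x)
  simpa using this

/-! ### Simplices and their weights -/

lemma IsSimplex.of_snoc {G : WG V} {k : ℕ} {x : Fin k → V} {y : V}
    (h : IsSimplex G (Fin.snoc x y : Fin (k + 1) → V)) : IsSimplex G x := by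
  refine ⟨fun a b hab => ?_, fun a b hab => ?_⟩
  · have := @h.1 a.castSucc b.castSucc (by simpa using hab)
    simpa using this
  · simpa using h.2 a.castSucc b.castSucc (by simpa using hab)

lemma finite_snoc_simplex (G : WG V) {k : ℕ} (x : Fin (k + 1) → V) :
    {y | IsSimplex G (Fin.snoc x y : Fin (k + 2) → V)}.Finite := by
  refine (G.locFin (x 0)).subset fun y hy => ?_
  have := hy.2 (Fin.castSucc 0) (Fin.last _) (Fin.castSucc_lt_last _).ne
  simpa [WG.Adj] using this

section Weights

variable {G : WG V} {n : ℕ} (W : CliqueWeights G n)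

lemma weight_pos_iff {i : ℕ} (hi : i ≤ n) (x : Fin (i + 1) → V) :
    0 < W.m i x ↔ IsSimplex G x := by
  rcases Nat.eq_zero_or_pos i with rfl | h
  · rw [W.m_zero]
    have hsub : ∀ a b : Fin (0 + 1), a = b := fun a b => by omega
    exact iff_of_true (G.m₀_pos _) ⟨fun a b _ => hsub a b, fun a b hab => (hab (hsub a b)).elim⟩
  · exact W.pos_iff i h hi x

lemma weight_eq_zero {i : ℕ} (hi : i ≤ n) {x : Fin (i + 1) → V} (hx : ¬ IsSimplex G x) :
    W.m i x = 0 :=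
  le_antisymm (not_lt.1 fun h => hx ((weight_pos_iff W hi x).1 h)) (W.nonneg i x)

lemma weight_comp {i : ℕ} (hi : i ≤ n) (x : Fin (i + 1) → V)
    (σ : Equiv.Perm (Fin (i + 1))) : W.m i (x ∘ σ) = W.m i x := by
  rcases Nat.eq_zero_or_pos i with rfl | h
  · congr 1
    funext a
    exact congrArg x (by omega)
  · exact W.perm_inv i h hi x σ

lemma IsSimplex.comp {k : ℕ} {x : Fin k → V} (h : IsSimplex G x)
    (σ : Equiv.Perm (Fin k)) : IsSimplex G (x ∘ σ) :=
  ⟨h.1.comp σ.injective, fun _ _ hab => h.2 _ _ (σ.injective.ne hab)⟩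

/-- Inserting `y` at any position gives a permutation of the tuple ending in `y`. -/
lemma exists_perm_insertNth {k : ℕ} (j : Fin (k + 1)) (y : V) (x : Fin k → V) :
    ∃ σ : Equiv.Perm (Fin (k + 1)),
      (j.insertNth y x : Fin (k + 1) → V) = (Fin.snoc x y : Fin (k + 1) → V) ∘ σ := by
  refine ⟨j.cycleRange.trans (Fin.last k).cycleRange.symm, ?_⟩
  have h : (Fin.snoc x y : Fin (k + 1) → V) = (Fin.last k).insertNth y x := by
    rw [Fin.insertNth_last']
  rw [h, ← Fin.cons_comp_cycleRange y x j, ← Fin.insertNth_comp_cycleRange_symm (Fin.last k) y x]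
  rfl

lemma exists_perm_snoc_comp {k : ℕ} (σ : Equiv.Perm (Fin k)) (y : V) (x : Fin k → V) :
    ∃ τ : Equiv.Perm (Fin (k + 1)),
      (Fin.snoc (x ∘ σ) y : Fin (k + 1) → V) = (Fin.snoc x y : Fin (k + 1) → V) ∘ τ := by
  refine ⟨finSuccEquivLast.trans (σ.optionCongr.trans finSuccEquivLast.symm), ?_⟩
  funext a
  refine Fin.lastCases ?_ (fun a => ?_) a <;> simp

lemma finite_support_snoc {i : ℕ} (hi : i + 1 ≤ n) (x : Fin (i + 1) → V) :
    ∀ y ∉ (finite_snoc_simplex G x).toFinset, W.m (i + 1) (Fin.snoc x y) = 0 := fun y hy =>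
  weight_eq_zero W hi (by simpa using hy)

end Weights

/-! ### Truncated cut-offs -/

/-- The average of a vertex function over the entries of a tuple, as a real number. -/
noncomputable def ravg (χ : V → ℝ) {k : ℕ} (x : Fin k → V) : ℝ :=
  (k : ℝ)⁻¹ * ∑ j : Fin k, χ (x j)

lemma avg_eq_ravg (χ : V → ℝ) {k : ℕ} (x : Fin k → V) : avg χ x = (ravg χ x : ℂ) := by
  simp [avg, ravg]

/-- The average `χ̃`, truncated to `[0, 1]`. Global `χ`-completeness does not bound the
functions `χ_k`, so the truncation is what makes the cut-offs uniformly bounded. -/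
noncomputable def cut (χ : V → ℝ) {k : ℕ} (x : Fin k → V) : ℝ :=
  max (min (ravg χ x) 1) 0

lemma cut_nonneg (χ : V → ℝ) {k : ℕ} (x : Fin k → V) : 0 ≤ cut χ x := le_max_right _ _

lemma cut_le_one (χ : V → ℝ) {k : ℕ} (x : Fin k → V) : cut χ x ≤ 1 :=
  max_le (min_le_right _ _) zero_le_one

lemma cut_comp (χ : V → ℝ) {k : ℕ} (x : Fin k → V) (σ : Equiv.Perm (Fin k)) :
    cut χ (x ∘ σ) = cut χ x := by
  have : ravg χ (x ∘ σ) = ravg χ x := by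
    unfold ravg
    congr 1
    exact Equiv.sum_comp σ fun j => χ (x j)
  rw [cut, cut, this]

lemma ravg_eq_one {χ : V → ℝ} {k : ℕ} {x : Fin (k + 1) → V} (h : ∀ j, χ (x j) = 1) :
    ravg χ x = 1 := by
  have : ((k : ℝ) + 1) ≠ 0 := by positivity
  simp [ravg, h, this]

lemma cut_eq_one {χ : V → ℝ} {k : ℕ} {x : Fin (k + 1) → V} (h : ∀ j, χ (x j) = 1) :
    cut χ x = 1 := by
  simp [cut, ravg_eq_one h]

lemma abs_cut_sub_cut_le (χ : V → ℝ) {k l : ℕ} (x : Fin k → V) (y : Fin l → V) :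
    |cut χ x - cut χ y| ≤ |ravg χ x - ravg χ y| := by
  refine (abs_max_sub_max_le_abs _ _ _).trans ?_
  simpa using abs_min_sub_min_le_max (ravg χ x) 1 (ravg χ y) 1

lemma sq_cut_sub_cut_le_one (χ : V → ℝ) {k l : ℕ} (x : Fin k → V) (y : Fin l → V) :
    (cut χ x - cut χ y) ^ 2 ≤ 1 := by
  have := cut_nonneg χ x
  have := cut_le_one χ x
  have := cut_nonneg χ y
  have := cut_le_one χ y
  exact (sq_le_one_iff_abs_le_one _).2 (abs_le.2 ⟨by linarith, by linarith⟩)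

lemma ravg_snoc_sub (χ : V → ℝ) {k : ℕ} (x : Fin (k + 1) → V) (y : V) :
    ravg χ (Fin.snoc x y : Fin (k + 2) → V) - ravg χ x =
      ((k : ℝ) + 2)⁻¹ * (χ y - ravg χ x) := by
  have h1 : ((k : ℝ) + 1) ≠ 0 := by positivity
  have h2 : ((k : ℝ) + 2) ≠ 0 := by positivity
  simp only [ravg, Fin.sum_univ_castSucc (n := k + 1), Fin.snoc_castSucc, Fin.snoc_last]
  push_cast
  field_simp
  ring

lemma sq_cut_snoc_sub_le (χ : V → ℝ) {k : ℕ} (x : Fin (k + 1) → V) (y : V) :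
    (cut χ (Fin.snoc x y : Fin (k + 2) → V) - cut χ x) ^ 2 ≤ (χ y - ravg χ x) ^ 2 := by
  refine sq_le_sq.2 ((abs_cut_sub_cut_le _ _ _).trans ?_)
  rw [ravg_snoc_sub, abs_mul]
  refine mul_le_of_le_one_left (abs_nonneg _) ?_
  rw [abs_of_nonneg (by positivity)]
  exact inv_le_one_of_one_le₀ (by linarith [(Nat.cast_nonneg k : (0 : ℝ) ≤ k)])

/-! ### The coboundary of an averaged vertex function -/

lemma dOn_avg_of_simplex {G : WG V} (χ : V → ℝ) {i : ℕ} {z : Fin (i + 2) → V}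
    (hz : IsSimplex G z) :
    dOn G Set.univ i (fun σ => avg χ σ) z =
      ((∑ l : Fin (i + 2), (-1 : ℝ) ^ (l : ℕ) * ravg χ (z ∘ l.succAbove) : ℝ) : ℂ) := by
  have hmem : z ∈ {x : Fin (i + 2) → V | IsSimplex G x ∧ ∀ j, x j ∈ (Set.univ : Set V)} :=
    ⟨hz, fun _ => Set.mem_univ _⟩
  rw [dOn, Set.indicator_of_mem hmem]
  simp [avg_eq_ravg]

/-- In odd degree the coboundary of the constant `1` is `1`, not `0`. -/
lemma dOn_avg_odd {G : WG V} {χ : V → ℝ} {i : ℕ} (hi : ¬ Even i) {z : Fin (i + 2) → V}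
    (hz : IsSimplex G z) (h1 : ∀ a, χ (z a) = 1) :
    dOn G Set.univ i (fun σ => avg χ σ) z = 1 := by
  rw [dOn_avg_of_simplex χ hz]
  have : ∀ l : Fin (i + 2), ravg χ (z ∘ l.succAbove) = 1 := fun l =>
    ravg_eq_one fun j => h1 _
  simp only [this, mul_one]
  rw [Fin.sum_neg_one_pow, if_neg (by simpa [Nat.even_add] using hi)]
  simp

/-- In even degree the coboundary of `χ̃` at `(x, y)` is a difference of values of `χ`. -/
lemma dOn_avg_even {G : WG V} (χ : V → ℝ) {i : ℕ} (hi : Even i) {x : Fin (i + 1) → V} {y : V}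
    (hz : IsSimplex G (Fin.snoc x y : Fin (i + 2) → V)) :
    dOn G Set.univ i (fun σ => avg χ σ) (Fin.snoc x y) =
      ((((i : ℝ) + 1)⁻¹ * (χ y - ∑ l : Fin (i + 1), (-1 : ℝ) ^ (l : ℕ) * χ (x l)) : ℝ) : ℂ) := by
  rw [dOn_avg_of_simplex χ hz]
  congr 1
  set z : Fin (i + 2) → V := Fin.snoc x y with hzdef
  have h : ∀ l : Fin (i + 2), ravg χ (z ∘ l.succAbove) =
      ((i : ℝ) + 1)⁻¹ * (∑ a, χ (z a) - χ (z l)) := by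
    intro l
    rw [ravg, Fin.sum_univ_succAbove (fun a => χ (z a)) l]
    simp
  have h0 : ∑ l : Fin (i + 2), (-1 : ℝ) ^ (l : ℕ) = 0 := by
    rw [Fin.sum_neg_one_pow, if_pos (by simpa [Nat.even_add] using hi)]
  have h1 : ∑ l : Fin (i + 2), (-1 : ℝ) ^ (l : ℕ) * χ (z l) =
      (∑ l : Fin (i + 1), (-1 : ℝ) ^ (l : ℕ) * χ (x l)) - χ y := by
    rw [Fin.sum_univ_castSucc]
    simp [hzdef, pow_succ, hi.neg_one_pow, sub_eq_add_neg]
  calc ∑ l : Fin (i + 2), (-1 : ℝ) ^ (l : ℕ) * ravg χ (z ∘ l.succAbove)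
      = ((i : ℝ) + 1)⁻¹ * ((∑ l : Fin (i + 2), (-1 : ℝ) ^ (l : ℕ)) * ∑ a, χ (z a)
          - ∑ l : Fin (i + 2), (-1 : ℝ) ^ (l : ℕ) * χ (z l)) := by
        rw [Finset.sum_mul, ← Finset.sum_sub_distrib, Finset.mul_sum]
        refine Finset.sum_congr rfl fun l _ => ?_
        rw [h]
        ring
    _ = _ := by
        rw [h0, h1]
        ring

/-- Adding up the alternating sums of an odd number of values over all cyclic rotations
gives the sum of the values. -/
lemma sum_rotations (χ : V → ℝ) {i : ℕ} (hi : Even i) (x : Fin (i + 1) → V) :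
    ∑ s : Fin (i + 1), ∑ l : Fin (i + 1), (-1 : ℝ) ^ (l : ℕ) * χ (x (l + s)) =
      ∑ l, χ (x l) := by
  rw [Finset.sum_comm]
  have : ∀ l : Fin (i + 1), ∑ s : Fin (i + 1), (-1 : ℝ) ^ (l : ℕ) * χ (x (l + s)) =
      (-1 : ℝ) ^ (l : ℕ) * ∑ a, χ (x a) := by
    intro l
    rw [← Finset.mul_sum]
    congr 1
    exact Equiv.sum_comp (Equiv.addLeft l) fun a => χ (x a)
  simp only [this]
  rw [← Finset.sum_mul, Fin.sum_neg_one_pow, if_neg (by simpa [Nat.even_add] using hi), one_mul]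

/-! ### Uniform energy bound for the truncated cut-offs -/

section Energy

variable {G : WG V} {n : ℕ} {W : CliqueWeights G n} {O : ℕ → Set V} {χ : ℕ → V → ℝ}

lemma IsChiWitnessOn.eventually_one (hw : IsChiWitnessOn W Set.univ O χ) {s : Set V}
    (hs : s.Finite) : ∀ᶠ k in atTop, ∀ v ∈ s, χ k v = 1 := by
  obtain ⟨-, hmono, -, hU, -, hone, -⟩ := hw
  rw [hs.eventually_all]
  intro v _
  obtain ⟨k₀, hk₀⟩ := Set.mem_iUnion.1 (hU ▸ Set.mem_univ v : v ∈ ⋃ k, O k)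
  filter_upwards [eventually_ge_atTop k₀] with k hk
  have hx : IsSimplex G (fun _ : Fin (0 + 1) => v) :=
    (weight_pos_iff W (Nat.zero_le n) _).1 (by rw [W.m_zero]; exact G.m₀_pos _)
  have := hone k 0 (Nat.zero_le n) (fun _ => v) hx (fun _ => Set.mem_univ _)
    fun _ => hmono hk hk₀
  simpa [avg] using this

/-- The cut-offs are eventually `1` on any given tuple. -/
lemma IsChiWitnessOn.eventually_cut (hw : IsChiWitnessOn W Set.univ O χ) {i : ℕ}
    (x : Fin (i + 1) → V) : ∀ᶠ k in atTop, cut (χ k) x = 1 :=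
  (hw.eventually_one (Set.finite_range x)).mono fun _ hk => cut_eq_one fun j => hk _ ⟨j, rfl⟩

lemma IsChiWitnessOn.eventually_cut_snoc (hw : IsChiWitnessOn W Set.univ O χ) {i : ℕ}
    (x : Fin (i + 1) → V) : ∀ᶠ k in atTop, cut (χ k) x = 1 ∧
      ∀ y ∈ (finite_snoc_simplex G x).toFinset,
        cut (χ k) (Fin.snoc x y : Fin (i + 2) → V) = 1 := by
  refine (hw.eventually_cut x).and ?_
  exact (Filter.eventually_all_finset _).2 fun y _ => hw.eventually_cut _

/-- The gradient bound with the junk-free finite sum over common neighbours. -/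
lemma sum_grad_le {C : ℝ} {χ : V → ℝ} {j : ℕ} (hj : j + 1 ≤ n) {x : Fin (j + 1) → V}
    (hx : IsSimplex G x) (h : gradEnergyOn W Set.univ j χ x ≤ C) :
    ∑ y ∈ (finite_snoc_simplex G x).toFinset, W.m (j + 1) (Fin.snoc x y) *
      ‖dOn G Set.univ j (fun σ => avg χ σ) (Fin.snoc x y)‖ ^ 2 ≤ C * W.m j x := by
  have hm := (weight_pos_iff W (by omega) x).2 hx
  rw [gradEnergyOn, Set.indicator_univ, tsum_eq_sum
    (s := (finite_snoc_simplex G x).toFinset)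
    fun y hy => by rw [finite_support_snoc W hj x y hy, zero_mul]] at h
  rwa [inv_mul_le_iff₀ hm, mul_comm] at h

/-- The uniform energy bound. In even degree `i`, averaging the given bound over the cyclic
rotations of `x` controls `χ(y) - χ̃(x)`. In odd degree the given bound, applied with cut-offs
equal to `1` near `x`, bounds the weighted degree of `x`, and the cut-offs are bounded. -/
lemma IsChiWitnessOn.cut_energy (hw : IsChiWitnessOn W Set.univ O χ) :
    ∃ C ≥ 0, ∀ k j, j + 1 ≤ n → ∀ x : Fin (j + 1) → V,
      ∑ y ∈ (finite_snoc_simplex G x).toFinset, W.m (j + 1) (Fin.snoc x y) *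
        (cut (χ k) (Fin.snoc x y : Fin (j + 2) → V) - cut (χ k) x) ^ 2 ≤ C * W.m j x := by
  have hw' := hw
  obtain ⟨-, -, -, -, -, -, C, hC, hE⟩ := hw
  refine ⟨(n : ℝ) ^ 2 * C, by positivity, fun k j hj x => ?_⟩
  have hjn : ((j : ℝ) + 1) ≤ n := by exact_mod_cast hj
  have hj0 : (0 : ℝ) ≤ j := Nat.cast_nonneg j
  have hmx := W.nonneg j x
  by_cases hx : IsSimplex G x
  swap
  · rw [Finset.sum_eq_zero fun y hy => ?_]
    · positivity
    · exact (hx (by simpa using hy : IsSimplex G (Fin.snoc x y)).of_snoc).elim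
  by_cases hpar : Even j
  · -- `q s y` is the coboundary of `χ̃` at `x` rotated by `s`, followed by `y`
    let q : Fin (j + 1) → V → ℝ := fun s y =>
      ((j : ℝ) + 1)⁻¹ * (χ k y - ∑ l : Fin (j + 1), (-1 : ℝ) ^ (l : ℕ) * χ k (x (l + s)))
    have hq : ∀ y, χ k y - ravg (χ k) x = ∑ s, q s y := by
      intro y
      have h1 : ((j : ℝ) + 1) ≠ 0 := by positivity
      simp only [q, ← Finset.mul_sum, Finset.sum_sub_distrib]
      rw [sum_rotations (χ k) hpar x, ravg]
      simp
      field_simp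
    have hs : ∀ s, ∑ y ∈ (finite_snoc_simplex G x).toFinset,
        W.m (j + 1) (Fin.snoc x y) * q s y ^ 2 ≤ C * W.m j x := by
      intro s
      let σ : Equiv.Perm (Fin (j + 1)) := Equiv.addRight s
      have hxs : IsSimplex G (x ∘ σ) := hx.comp σ
      have h := sum_grad_le hj hxs (hE k j hj (x ∘ σ) hxs fun _ => Set.mem_univ _)
      rw [weight_comp W (by omega)] at h
      refine le_trans (le_of_eq ?_) h
      have hset : (finite_snoc_simplex G x).toFinset =
          (finite_snoc_simplex G (x ∘ σ)).toFinset := by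
        ext y
        obtain ⟨τ, hτ⟩ := exists_perm_snoc_comp σ y x
        simp only [Set.Finite.mem_toFinset, Set.mem_ofPred_eq]
        rw [← weight_pos_iff W hj, ← weight_pos_iff W hj, hτ, weight_comp W hj]
      rw [← hset]
      refine Finset.sum_congr rfl fun y hy => ?_
      rw [hset] at hy
      have hy' : IsSimplex G (Fin.snoc (x ∘ σ) y : Fin (j + 2) → V) := by simpa using hy
      obtain ⟨τ, hτ⟩ := exists_perm_snoc_comp σ y x
      rw [dOn_avg_even (χ k) hpar hy', Complex.norm_real, Real.norm_eq_abs, sq_abs, hτ,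
        weight_comp W hj]
      rfl
    calc ∑ y ∈ (finite_snoc_simplex G x).toFinset, W.m (j + 1) (Fin.snoc x y) *
          (cut (χ k) (Fin.snoc x y : Fin (j + 2) → V) - cut (χ k) x) ^ 2
        ≤ ∑ y ∈ (finite_snoc_simplex G x).toFinset, W.m (j + 1) (Fin.snoc x y) *
          (((j : ℝ) + 1) * ∑ s, q s y ^ 2) := by
          refine Finset.sum_le_sum fun y _ => mul_le_mul_of_nonneg_left ?_ (W.nonneg _ _)
          refine (sq_cut_snoc_sub_le _ _ _).trans ?_
          rw [hq]
          simpa using sq_sum_le_card_mul_sum_sq (s := Finset.univ) (f := fun s => q s y)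
      _ = ((j : ℝ) + 1) * ∑ s, ∑ y ∈ (finite_snoc_simplex G x).toFinset,
          W.m (j + 1) (Fin.snoc x y) * q s y ^ 2 := by
          rw [Finset.sum_comm, Finset.mul_sum]
          refine Finset.sum_congr rfl fun y _ => ?_
          rw [← Finset.mul_sum]
          ring
      _ ≤ ((j : ℝ) + 1) * ∑ _s : Fin (j + 1), C * W.m j x := by
          gcongr with s
          exact hs s
      _ = ((j : ℝ) + 1) ^ 2 * C * W.m j x := by
          simp
          ring
      _ ≤ (n : ℝ) ^ 2 * C * W.m j x := by gcongr
  · have hdeg : ∑ y ∈ (finite_snoc_simplex G x).toFinset, W.m (j + 1) (Fin.snoc x y) ≤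
        C * W.m j x := by
      have hfin : (Set.range x ∪ {y | IsSimplex G (Fin.snoc x y : Fin (j + 2) → V)}).Finite :=
        (Set.finite_range x).union (finite_snoc_simplex G x)
      obtain ⟨l, hl⟩ := (hw'.eventually_one hfin).exists
      refine le_trans (le_of_eq ?_) (sum_grad_le hj hx (hE l j hj x hx fun _ => Set.mem_univ _))
      refine Finset.sum_congr rfl fun y hy => ?_
      have hy' : IsSimplex G (Fin.snoc x y : Fin (j + 2) → V) := by simpa using hy
      rw [dOn_avg_odd hpar hy' fun a => ?_]
      · simp
      · refine hl _ (Fin.lastCases ?_ (fun a => ?_) a)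
        · exact Or.inr (by simpa using hy')
        · exact Or.inl ⟨a, by simp⟩
    calc ∑ y ∈ (finite_snoc_simplex G x).toFinset, W.m (j + 1) (Fin.snoc x y) *
          (cut (χ k) (Fin.snoc x y : Fin (j + 2) → V) - cut (χ k) x) ^ 2
        ≤ ∑ y ∈ (finite_snoc_simplex G x).toFinset, W.m (j + 1) (Fin.snoc x y) :=
          Finset.sum_le_sum fun y _ =>
            mul_le_of_le_one_right (W.nonneg _ _) (sq_cut_sub_cut_le_one _ _ _)
      _ ≤ 1 ^ 2 * C * W.m j x := by simpa using hdeg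
      _ ≤ (n : ℝ) ^ 2 * C * W.m j x := by
          gcongr
          linarith

/-! ### Commutators with the cut-offs -/

/-- The cut-offs converge strongly to the identity on `ℓ²`. -/
lemma isNull_cut_sub_one (hw : IsChiWitnessOn W Set.univ O χ) {i : ℕ}
    {f : (Fin (i + 1) → V) → ℂ} (hf : MemL2 W i f) :
    IsNull (W.m i) fun k x => ((cut (χ k) x : ℂ) - 1) * f x := by
  refine isNull_of_dominated (W.nonneg i) hf (fun k x => ?_) fun x => ?_
  · refine mul_le_mul_of_nonneg_left ?_ (W.nonneg i x)
    rw [norm_mul]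
    have : ‖(cut (χ k) x : ℂ) - 1‖ ≤ 1 := by
      rw [← Complex.ofReal_one, ← Complex.ofReal_sub, Complex.norm_real, Real.norm_eq_abs]
      exact abs_le.2 ⟨by linarith [cut_nonneg (χ k) x], by linarith [cut_le_one (χ k) x]⟩
    gcongr
    exact mul_le_of_le_one_left (norm_nonneg _) this
  · exact (hw.eventually_cut x).mono fun k hk => by simp [hk]

lemma delta_eq_sum {i : ℕ} (hi : i + 1 ≤ n) (g : (Fin (i + 2) → V) → ℂ)
    (x : Fin (i + 1) → V) :
    delta G W i g x = ((W.m i x : ℝ) : ℂ)⁻¹ * ∑ y ∈ (finite_snoc_simplex G x).toFinset,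
      ((W.m (i + 1) (Fin.snoc x y) : ℝ) : ℂ) * g (Fin.snoc x y) := by
  rw [delta, deltaOn, Set.indicator_univ, tsum_eq_sum (s := (finite_snoc_simplex G x).toFinset)
    fun y hy => by rw [finite_support_snoc W hi x y hy]; simp]

/-- The commutator of `δ` with the cut-offs: Cauchy–Schwarz on the fibre over `x` bounds it by
the energy of the cut-off times the mass of `g` on that fibre. -/
lemma isNull_delta_comm (hw : IsChiWitnessOn W Set.univ O χ) {i : ℕ} (hi : i + 1 ≤ n)
    {g : (Fin (i + 2) → V) → ℂ} (hg : MemL2 W (i + 1) g) :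
    IsNull (W.m i) fun k x =>
      delta G W i (fun z => (cut (χ k) z : ℂ) * g z) x - (cut (χ k) x : ℂ) * delta G W i g x := by
  obtain ⟨C, hC, hE⟩ := hw.cut_energy
  have hcomm : ∀ k x,
      delta G W i (fun z => (cut (χ k) z : ℂ) * g z) x - (cut (χ k) x : ℂ) * delta G W i g x =
      ((W.m i x : ℝ) : ℂ)⁻¹ * ∑ y ∈ (finite_snoc_simplex G x).toFinset,
        ((W.m (i + 1) (Fin.snoc x y) : ℝ) : ℂ) *
          ((cut (χ k) (Fin.snoc x y : Fin (i + 2) → V) - cut (χ k) x : ℝ) : ℂ) *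
            g (Fin.snoc x y) := by
    intro k x
    rw [delta_eq_sum hi, delta_eq_sum hi, mul_left_comm, ← mul_sub, Finset.mul_sum,
      ← Finset.sum_sub_distrib]
    congr 1
    refine Finset.sum_congr rfl fun y _ => ?_
    push_cast
    ring
  -- the mass of `g` on the fibre over `x`
  let b : (Fin (i + 1) → V) → ℝ := fun x =>
    ∑ y ∈ (finite_snoc_simplex G x).toFinset,
      W.m (i + 1) (Fin.snoc x y) * ‖g (Fin.snoc x y)‖ ^ 2
  have hb : Summable b := by
    have h := (Fin.insertNthEquiv (fun _ => V) (Fin.last (i + 1))).summable_iff.2 hg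
    have h := (Equiv.prodComm _ _).summable_iff.2 h
    have h := ((summable_prod_of_nonneg fun p => mul_nonneg (W.nonneg _ _) (sq_nonneg _)).1 h).2
    refine h.congr fun x => ?_
    have he : ∀ y, Fin.insertNthEquiv (fun _ => V) (Fin.last (i + 1)) (y, x) =
        (Fin.snoc x y : Fin (i + 2) → V) := fun y => Fin.insertNth_last' y x
    simp only [Equiv.prodComm_apply, Prod.swap_prod_mk, he]
    exact tsum_eq_sum fun y hy => by rw [finite_support_snoc W hi x y hy, zero_mul]
  refine isNull_of_dominated (W.nonneg i) (hb.mul_left C) (fun k x => ?_) fun x => ?_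
  · rw [hcomm, norm_mul, norm_inv, Complex.norm_real, Real.norm_of_nonneg (W.nonneg i x)]
    have hb0 : 0 ≤ b x :=
      Finset.sum_nonneg fun y _ => mul_nonneg (W.nonneg _ _) (sq_nonneg _)
    rcases (W.nonneg i x).eq_or_lt with h0 | hpos
    · rw [← h0]
      simpa using mul_nonneg hC hb0
    set S := ∑ y ∈ (finite_snoc_simplex G x).toFinset,
        ((W.m (i + 1) (Fin.snoc x y) : ℝ) : ℂ) *
          ((cut (χ k) (Fin.snoc x y : Fin (i + 2) → V) - cut (χ k) x : ℝ) : ℂ) *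
            g (Fin.snoc x y) with hS
    have h1 : ‖S‖ ≤ ∑ y ∈ (finite_snoc_simplex G x).toFinset,
        W.m (i + 1) (Fin.snoc x y) *
          |cut (χ k) (Fin.snoc x y : Fin (i + 2) → V) - cut (χ k) x| * ‖g (Fin.snoc x y)‖ := by
      refine (norm_sum_le _ _).trans (Finset.sum_le_sum fun y _ => ?_)
      rw [norm_mul, norm_mul, Complex.norm_real, Complex.norm_real,
        Real.norm_of_nonneg (W.nonneg _ _), Real.norm_eq_abs]
    have h2 : ‖S‖ ^ 2 ≤ (C * W.m i x) * b x := by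
      refine (pow_le_pow_left₀ (norm_nonneg _) h1 2).trans ?_
      refine (Finset.sum_sq_le_sum_mul_sum_of_sq_le_mul _
        (f := fun y => W.m (i + 1) (Fin.snoc x y) *
          (cut (χ k) (Fin.snoc x y : Fin (i + 2) → V) - cut (χ k) x) ^ 2)
        (g := fun y => W.m (i + 1) (Fin.snoc x y) * ‖g (Fin.snoc x y)‖ ^ 2)
        (fun y _ => mul_nonneg (W.nonneg _ _) (sq_nonneg _))
        (fun y _ => mul_nonneg (W.nonneg _ _) (sq_nonneg _)) fun y _ => ?_).trans ?_
      · rw [mul_pow, mul_pow, sq_abs]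
        exact le_of_eq (by ring)
      · exact mul_le_mul_of_nonneg_right (hE k i hi x) hb0
    calc W.m i x * ((W.m i x)⁻¹ * ‖S‖) ^ 2 = (W.m i x)⁻¹ * ‖S‖ ^ 2 := by
          field_simp
      _ ≤ (W.m i x)⁻¹ * ((C * W.m i x) * b x) := by gcongr
      _ = C * b x := by field_simp
  · filter_upwards [hw.eventually_cut_snoc x] with k hk
    rw [hcomm, Finset.sum_eq_zero fun y hy => ?_, mul_zero]
    rw [hk.1, hk.2 y hy]
    simp

/-- One term of the commutator of `d` with the cut-offs. Summing first over the inserted vertex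
gives the energy of the cut-off times the density of `f`. -/
lemma isNull_d_comm_term (hw : IsChiWitnessOn W Set.univ O χ) {i : ℕ} (hi : i + 1 ≤ n)
    {f : (Fin (i + 1) → V) → ℂ} (hf : MemL2 W i f) (j : Fin (i + 2)) :
    IsNull (W.m (i + 1)) fun k x => (-1 : ℂ) ^ (j : ℕ) *
      ((cut (χ k) (x ∘ j.succAbove) - cut (χ k) x : ℝ) : ℂ) * f (x ∘ j.succAbove) := by
  obtain ⟨C, hC, hE⟩ := hw.cut_energy
  let e : (Fin (i + 1) → V) × V ≃ (Fin (i + 2) → V) :=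
    (Equiv.prodComm _ _).trans (Fin.insertNthEquiv (fun _ => V) j)
  let h : ℕ → (Fin (i + 2) → V) → ℝ := fun k x => W.m (i + 1) x * ‖(-1 : ℂ) ^ (j : ℕ) *
      ((cut (χ k) (x ∘ j.succAbove) - cut (χ k) x : ℝ) : ℂ) * f (x ∘ j.succAbove)‖ ^ 2
  have h0 : ∀ k x, 0 ≤ h k x := fun k x => mul_nonneg (W.nonneg _ _) (sq_nonneg _)
  have he : ∀ k x y, h k (e (x, y)) = W.m (i + 1) (Fin.snoc x y) *
      (cut (χ k) (Fin.snoc x y : Fin (i + 2) → V) - cut (χ k) x) ^ 2 * ‖f x‖ ^ 2 := by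
    intro k x y
    have he1 : e (x, y) = (j.insertNth y x : Fin (i + 2) → V) := rfl
    have he2 : (j.insertNth y x : Fin (i + 2) → V) ∘ j.succAbove = x := by
      funext a
      simp
    simp only [h]
    rw [he1, he2]
    obtain ⟨σ, hσ⟩ := exists_perm_insertNth j y x
    rw [hσ, weight_comp W hi, cut_comp, norm_mul, norm_mul, Complex.norm_real, Real.norm_eq_abs,
      mul_pow, mul_pow, sq_abs]
    simp
    ring
  have hfib0 : ∀ k x, ∀ y ∉ (finite_snoc_simplex G x).toFinset, h k (e (x, y)) = 0 :=
    fun k x y hy => by rw [he, finite_support_snoc W hi x y hy]; simp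
  have hfib : ∀ k x, ∑' y, h k (e (x, y)) =
      (∑ y ∈ (finite_snoc_simplex G x).toFinset, W.m (i + 1) (Fin.snoc x y) *
      (cut (χ k) (Fin.snoc x y : Fin (i + 2) → V) - cut (χ k) x) ^ 2) * ‖f x‖ ^ 2 := by
    intro k x
    rw [tsum_eq_sum (hfib0 k x), Finset.sum_mul]
    exact Finset.sum_congr rfl fun y _ => he k x y
  have hle : ∀ k x, ∑' y, h k (e (x, y)) ≤ C * (W.m i x * ‖f x‖ ^ 2) := by
    intro k x
    rw [hfib, ← mul_assoc]
    exact mul_le_mul_of_nonneg_right (hE k i hi x) (sq_nonneg _)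
  have hnn : ∀ k x, 0 ≤ ∑' y, h k (e (x, y)) := fun k x => tsum_nonneg fun y => h0 _ _
  have hb : Summable fun x => C * (W.m i x * ‖f x‖ ^ 2) := Summable.mul_left C hf
  have hsum : ∀ k, Summable fun p => h k (e p) := fun k =>
    (summable_prod_of_nonneg fun p => h0 k _).2
      ⟨fun x => summable_of_hasFiniteSupport <|
        ((finite_snoc_simplex G x).toFinset.finite_toSet.subset fun y hy => by
          by_contra hy'
          exact hy (hfib0 k x y hy')),
        Summable.of_nonneg_of_le (hnn k) (hle k) hb⟩
  refine ⟨fun k => e.summable_iff.1 (hsum k), ?_⟩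
  have htsum : ∀ k, ∑' x, h k x = ∑' x, ∑' y, h k (e (x, y)) := fun k => by
    rw [← (hsum k).tsum_prod, ← e.tsum_eq]
  have hlim := tendsto_tsum_of_dominated_convergence (𝓕 := atTop)
    (f := fun k x => ∑' y, h k (e (x, y))) (g := fun _ => 0) hb
    (fun x => tendsto_const_nhds.congr' ((hw.eventually_cut_snoc x).mono fun k hk => by
      simp only [hfib]
      rw [Finset.sum_eq_zero fun y hy => ?_, zero_mul]
      rw [hk.1, hk.2 y hy]
      simp))
    (Eventually.of_forall fun k x => by
      rw [Real.norm_of_nonneg (hnn k x)]; exact hle k x)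
  simpa only [← htsum, tsum_zero] using hlim

lemma isNull_d_comm (hw : IsChiWitnessOn W Set.univ O χ) {i : ℕ} (hi : i + 1 ≤ n)
    {f : (Fin (i + 1) → V) → ℂ} (hf : MemL2 W i f) :
    IsNull (W.m (i + 1)) fun k x =>
      d G i (fun z => (cut (χ k) z : ℂ) * f z) x - (cut (χ k) x : ℂ) * d G i f x := by
  refine (IsNull.sum (W.nonneg _) Finset.univ fun j => isNull_d_comm_term hw hi hf j).congr ?_
  intro k x hx
  have hsx : IsSimplex G x := by
    by_contra h
    exact hx (weight_eq_zero W hi h)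
  have hmem : x ∈ {x : Fin (i + 2) → V | IsSimplex G x ∧ ∀ j, x j ∈ (Set.univ : Set V)} :=
    ⟨hsx, fun _ => Set.mem_univ _⟩
  rw [d, d, dOn, dOn, Set.indicator_of_mem hmem, Set.indicator_of_mem hmem, Finset.mul_sum,
    ← Finset.sum_sub_distrib]
  refine Finset.sum_congr rfl fun j _ => ?_
  push_cast
  ring

lemma IsNull.tendstoL2 {i : ℕ} {u : ℕ → (Fin (i + 1) → V) → ℂ} {f : (Fin (i + 1) → V) → ℂ}
    (h : IsNull (W.m i) fun k x => u k x - f x) : TendstoL2 W i u f := by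
  simpa [TendstoL2, norm2] using h.2.const_mul ((Nat.factorial (i + 1) : ℝ))⁻¹

lemma isNull_delta_comm_family (hw : IsChiWitnessOn W Set.univ O χ)
    {u : ∀ i : ℕ, (Fin (i + 1) → V) → ℂ} (hu : CochainFamily G n u) (hL : MemL2Family W u)
    (i : ℕ) :
    IsNull (W.m i) fun k x => delta G W i (fun z => (cut (χ k) z : ℂ) * u (i + 1) z) x -
      (cut (χ k) x : ℂ) * delta G W i (u (i + 1)) x := by
  by_cases hi : i + 1 ≤ n
  · exact isNull_delta_comm hw hi (hL (i + 1))
  · refine (isNull_zero (W.m i)).congr fun k x _ => ?_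
    simp [hu.2 (i + 1) (by omega), delta, deltaOn]

/-- A cochain multiplied by a cut-off has finite support: a simplex in its support meets the
finite support of `χ`, and local finiteness leaves finitely many such simplices. -/
lemma finite_support_cut {χ : V → ℝ} (hχ : (Function.support χ).Finite) {i : ℕ}
    {f : (Fin (i + 1) → V) → ℂ} (hf : IsCochain G i f) :
    (Function.support fun x => (cut χ x : ℂ) * f x).Finite := by
  let T : Set V := ⋃ v ∈ Function.support χ, insert v {y | 0 < G.m₁ v y}
  have hT : T.Finite := hχ.biUnion fun v _ => (G.locFin v).insert v
  refine (Set.Finite.pi' fun _ : Fin (i + 1) => hT).subset fun x hx => ?_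
  rw [Function.mem_support] at hx
  have hsx : IsSimplex G x := by
    by_contra h
    exact hx (by rw [hf.2 x h, mul_zero])
  have : ∃ j, χ (x j) ≠ 0 := by
    by_contra! h
    exact hx (by simp [cut, ravg, h])
  obtain ⟨j, hj⟩ := this
  intro a
  refine Set.mem_biUnion (x := x j) hj ?_
  by_cases haj : a = j
  · exact Or.inl (by rw [haj])
  · exact Or.inr (hsx.2 j a (Ne.symm haj))

end Energy

/-- If the weighted oriented clique `n`-simplicial complex is globally
`χ`-complete, then the Gauss–Bonnet operator `D = d + δ`, defined on `⊕_{i=0}^n C_c^i(V)`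
in `H = ⊕_{i=0}^n ℓ²(m_i)`, is essentially self-adjoint (its minimal and maximal
extensions coincide). -/
theorem gaussBonnet_esa_of_globallyChiComplete
    {V : Type*} [Countable V] (G : WG V) {n : ℕ} (hn : 2 ≤ n) (W : CliqueWeights G n)
    (hχ : GloballyChiComplete W) :
    ESA_D W := by
  obtain ⟨O, χ, hw⟩ := hχ
  intro u hu hL hDL
  refine ⟨fun k i x => (cut (χ k) x : ℂ) * u i x, fun k => ⟨⟨fun i => ⟨?_, ?_⟩, ?_⟩, ?_⟩, ?_, ?_⟩
  · intro x σ
    simp only [cut_comp]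
    rw [(hu.1 i).1 x σ]
    ring
  · intro x hx
    simp only [(hu.1 i).2 x hx, mul_zero]
  · intro i hi
    funext x
    simp [hu.2 i hi]
  · exact fun i => finite_support_cut (hw.2.2.2.2.1 k) (hu.1 i)
  · exact fun i => ((isNull_cut_sub_one hw (hL i)).congr fun k x _ => by ring).tendstoL2
  · -- `D(φu) - Du = [δ, φ]u + [d, φ]u + (φ - 1)Du` for each cut-off `φ`
    rintro (_ | i)
    · exact (((isNull_delta_comm_family hw hu hL 0).add (W.nonneg 0)
        (isNull_cut_sub_one hw (hDL 0))).congr fun k x _ => by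
          simp only [Dop]
          ring).tendstoL2
    · by_cases hi : i + 1 ≤ n
      · exact ((((isNull_delta_comm_family hw hu hL (i + 1)).add (W.nonneg _)
          (isNull_d_comm hw hi (hL i))).add (W.nonneg _)
          (isNull_cut_sub_one hw (hDL (i + 1)))).congr fun k x _ => by
            simp only [Dop, if_pos hi]
            ring).tendstoL2
      · exact ((isNull_zero _).congr fun k x _ => by
          simp only [Dop, if_neg hi]
          simp).tendstoL2

end DiscreteHodge
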